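/- Let S be a regular integral scheme of dimension d over an algebraically closed field k of characteristic ≠ 2, let x be a point of S of codimension ≥ i (for a fixed i > 0), and let K_x be the fraction field of the completion of the local ring O_{S,x}. If q is a quadratic form over the complete local ring Ô_{S,x} of rank > 2^{d−i} + 1 whose reduction has radical of rank ≤ 1 (simple degeneration), then q is isotropic over K_x. -/

import Mathlib

/-!
STATEMENT 19: Let S be a regular integral scheme of dimension d over an algebraically
closed field k of characteristic ≠ 2, x a point of S of codimension ≥ i (for fixed
i > 0), and K_x the fraction field of the completion Ô_{S,x} of the local ring O_{S,x}.
If q is a quadratic form over Ô_{S,x} of rank > 2^{d−i} + 1 whose reduction has radical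
of rank ≤ 1 (simple degeneration), then q is isotropic over K_x.

Here: regularity of S is expressed by each stalk having its maximal ideal generated by
dim-many elements; "codimension ≥ i" by a strictly specializing chain of length i ending
at x; the completion is the adic completion of the stalk at its maximal ideal; "radical
of the reduction has rank ≤ 1" via the submodule {v | ∀ w, polar q v w ∈ m̂} being
contained in span{v₀} ⊔ m̂•⊤, where m̂ is the extension of the maximal ideal; and
isotropy over the fraction field K_x of the (domain) Ô_{S,x} is equivalent, by clearing
denominators, to the existence of a nonzero isotropic vector over Ô_{S,x}.
-/

open AlgebraicGeometry

/-- The preimage in `V` of the radical of the reduction of `q` modulo `m`. -/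
def QuadraticMap.residualRadical {R V : Type*} [CommRing R] [AddCommGroup V] [Module R V]
    (m : Ideal R) (q : QuadraticForm R V) : Submodule R V where
  carrier := {v | ∀ w, QuadraticMap.polar q v w ∈ m}
  add_mem' := fun hx hy w => by
    rw [QuadraticMap.polar_add_left]; exact Ideal.add_mem m (hx w) (hy w)
  zero_mem' := fun w => by
    rw [QuadraticMap.polar_zero_left]; exact m.zero_mem
  smul_mem' := fun c x hx w => by
    rw [QuadraticMap.polar_smul_left, smul_eq_mul]; exact Ideal.mul_mem_left m c (hx w)

/-- The completed local ring `Ô_{X,x}` of a scheme at a point. -/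
noncomputable abbrev completedStalk (X : Scheme) (x : X) : Type _ :=
  AdicCompletion (IsLocalRing.maximalIdeal (X.presheaf.stalk x)) (X.presheaf.stalk x)

/-!
Over an algebraically closed field, `m` quadratic forms in more than `m` variables have a common
nontrivial zero, by Krull's height theorem. This property climbs the tower of field extensions:
finite extensions preserve it by restriction of scalars, and each new transcendental doubles the
required number of variables, because polynomial vectors of degree at most `N` turn a quadratic
system into one with about twice as many equations as unknowns, up to the original ratio. Hence the
residue field at a point of codimension at least `i` makes every form in more than `2 ^ (d - i)`
variables isotropic.

Modulo the maximal ideal, the vectors in the radical of `q` are multiples of a single vector `v₀`.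
If `v₀` has a unit `j₀`-th coordinate, a nonzero vector with vanishing `j₀`-th coordinate is not
such a multiple. Restricting `q` to this hyperplane costs one variable and produces a zero of the
reduction outside the radical, that is, a smooth zero, which Hensel's lemma lifts.
-/

section Matrix

variable {R n : Type*} [CommRing R] [Fintype n] [DecidableEq n]

theorem exists_toQuadraticForm'_eq (q : QuadraticForm R (n → R)) :
    ∃ M : Matrix n n R, M.toQuadraticForm' = q := by
  obtain ⟨B, rfl⟩ := LinearMap.BilinMap.toQuadraticMap_surjective q
  exact ⟨LinearMap.toMatrix₂' R B, congrArg _ (Matrix.toLinearMap₂'_toMatrix' B)⟩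

theorem toQuadraticForm'_apply_eq_sum (M : Matrix n n R) (v : n → R) :
    M.toQuadraticForm' v = ∑ i, ∑ j, v i * M i j * v j := by
  simp [Matrix.toQuadraticForm', Matrix.toLinearMap₂'_apply', dotProduct, Matrix.mulVec,
    Finset.mul_sum, mul_assoc]

theorem toQuadraticForm'_map {S : Type*} [CommRing S] (f : R →+* S) (M : Matrix n n R)
    (v : n → R) : (M.map f).toQuadraticForm' (f ∘ v) = f (M.toQuadraticForm' v) := by
  simp [toQuadraticForm'_apply_eq_sum]

end Matrix

/-- Every system of `m` quadratic forms in more than `m * 2 ^ r` variables over `K` has a common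
nontrivial zero. This is the Tsen–Lang condition in degree two, imposed on systems rather than on
single forms so that it passes to field extensions by restriction of scalars. -/
def HasQuadraticLangProperty (K : Type*) [Field K] (r : ℕ) : Prop :=
  ∀ (m n : ℕ) (q : Fin m → QuadraticForm K (Fin n → K)), m * 2 ^ r < n →
    ∃ v, v ≠ 0 ∧ ∀ l, q l v = 0

namespace HasQuadraticLangProperty

section Descent

variable {L : Type*} [Field L] {r : ℕ}

theorem mono {s : ℕ} (h : HasQuadraticLangProperty L r) (hrs : r ≤ s) :
    HasQuadraticLangProperty L s := fun m n q hn =>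
  h m n q (hn.trans_le' (Nat.mul_le_mul_left m (Nat.pow_le_pow_right two_pos hrs)))

theorem exists_ne_zero {V W κ : Type*} [AddCommGroup V] [Module L V] [AddCommGroup W] [Module L W]
    [FiniteDimensional L W] [Fintype κ] (h : HasQuadraticLangProperty L r)
    (q : κ → QuadraticMap L V W)
    (hcard : Fintype.card κ * Module.finrank L W * 2 ^ r < Module.finrank L V) :
    ∃ v, v ≠ 0 ∧ ∀ l, q l v = 0 := by
  have : FiniteDimensional L V := Module.finite_of_finrank_pos (Nat.zero_lt_of_lt hcard)
  let b := (Module.finBasis L V).equivFun.symm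
  let c := Module.finBasis L W
  let e : Fin (Fintype.card κ * Module.finrank L W) ≃ κ × Fin (Module.finrank L W) :=
    (Fintype.equivFinOfCardEq (by simp)).symm
  obtain ⟨v, hv, hqv⟩ := h _ _
    (fun j => (c.coord (e j).2).compQuadraticMap ((q (e j).1).comp b.toLinearMap)) hcard
  exact ⟨b v, b.map_ne_zero_iff.2 hv, fun l => c.forall_coord_eq_zero_iff.1 fun j => by
    simpa using hqv (e.symm (l, j))⟩

theorem exists_ne_zero_of_mapsTo {A ι κ : Type*} [CommRing A] [Algebra L A] [Fintype ι]
    [Fintype κ] (h : HasQuadraticLangProperty L r) (q : κ → QuadraticForm A (ι → A))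
    (U W : Submodule L A) [FiniteDimensional L U] [FiniteDimensional L W]
    (hUW : ∀ v, (∀ i, v i ∈ U) → ∀ l, q l v ∈ W)
    (hcard : Fintype.card κ * Module.finrank L W * 2 ^ r <
      Fintype.card ι * Module.finrank L U) :
    ∃ v, v ≠ 0 ∧ ∀ l, q l v = 0 := by
  obtain ⟨π, hπ⟩ := W.subtype.exists_leftInverse_of_injective W.ker_subtype
  obtain ⟨v, hv, hqv⟩ := h.exists_ne_zero
    (fun l => (π.compQuadraticMap' (q l)).comp (U.subtype.compLeft ι))
    (by simpa [Module.finrank_pi_fintype] using hcard)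
  refine ⟨fun i => v i, fun h0 => hv (funext fun i => Subtype.ext (congrFun h0 i)), fun l => ?_⟩
  have hπq := DFunLike.congr_fun hπ ⟨_, hUW (fun i => v i) (fun i => (v i).2) l⟩
  exact congrArg Subtype.val (hπq.symm.trans (hqv l))

end Descent

section Algebraic

variable {L K : Type*} [Field L] [Field K] {r : ℕ}

theorem of_isAlgebraic [Algebra L K] [Algebra.IsAlgebraic L K]
    (h : HasQuadraticLangProperty L r) : HasQuadraticLangProperty K r := by
  intro m n q hn
  choose M hM using fun l => exists_toQuadraticForm'_eq (q l)
  let S := Set.range fun p : Fin m × Fin n × Fin n => M p.1 p.2.1 p.2.2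
  let E := IntermediateField.adjoin L S
  have : Finite S := (Set.finite_range _).to_subtype
  have : FiniteDimensional L E :=
    IntermediateField.finiteDimensional_adjoin fun x _ => Algebra.IsIntegral.isIntegral x
  have : FiniteDimensional L E.toSubalgebra.toSubmodule := this
  have hME (l i j) : M l i j ∈ E := IntermediateField.subset_adjoin L S ⟨(l, i, j), rfl⟩
  refine h.exists_ne_zero_of_mapsTo q E.toSubalgebra.toSubmodule E.toSubalgebra.toSubmodule
    (fun v hv l => ?_) ?_
  · rw [← hM, toQuadraticForm'_apply_eq_sum]
    exact E.sum_mem fun i _ => E.sum_mem fun j _ =>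
      E.mul_mem (E.mul_mem (hv i) (hME l i j)) (hv j)
  · simp only [Fintype.card_fin]
    rw [mul_right_comm]
    exact Nat.mul_lt_mul_of_pos_right hn (Module.finrank_pos (R := L) (M := E))

theorem of_surjective (h : HasQuadraticLangProperty L r) (f : L →+* K)
    (hf : Function.Surjective f) : HasQuadraticLangProperty K r := by
  let := f.toAlgebra
  have : Algebra.IsAlgebraic L K := ⟨fun x => by
    obtain ⟨y, rfl⟩ := hf x
    exact isAlgebraic_algebraMap y⟩
  exact h.of_isAlgebraic

end Algebraic

end HasQuadraticLangProperty

section PurelyTranscendental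

open Filter MvPolynomial Topology

theorem finrank_restrictDegree (L σ : Type*) [Field L] [Finite σ] (N : ℕ) :
    Module.finrank L (restrictDegree σ L N) = (N + 1) ^ Nat.card σ := by
  let e : {a : σ →₀ ℕ | ∀ i, a i ≤ N} ≃ (σ → Fin (N + 1)) :=
    (Finsupp.equivFunOnFinite.subtypeEquiv fun _ => by simp).trans
      (Equiv.subtypePiEquivPi (p := fun _ a => a < N + 1)) |>.trans
      (Equiv.piCongrRight fun _ => Fin.equivSubtype.symm)
  rw [restrictDegree, Module.finrank_eq_nat_card_basis (basisRestrictSupport L _), Nat.card_congr e,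
    Nat.card_fun, Nat.card_fin]

section

variable {L σ : Type*} [CommSemiring L]

theorem mem_restrictDegree_iff_degreeOf_le {p : MvPolynomial σ L} {N : ℕ} :
    p ∈ restrictDegree σ L N ↔ ∀ i, p.degreeOf i ≤ N := by
  simp only [mem_restrictDegree, degreeOf_le_iff]
  exact ⟨fun h i a ha => h a ha i, fun h a ha i => h i a ha⟩

theorem mul_mem_restrictDegree {p q : MvPolynomial σ L} {a b : ℕ}
    (hp : p ∈ restrictDegree σ L a) (hq : q ∈ restrictDegree σ L b) :
    p * q ∈ restrictDegree σ L (a + b) := by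
  rw [mem_restrictDegree_iff_degreeOf_le] at *
  exact fun i => (degreeOf_mul_le i p q).trans (add_le_add (hp i) (hq i))

theorem exists_forall_mem_restrictDegree {ι : Type*} [Finite ι] (p : ι → MvPolynomial σ L) :
    ∃ N, ∀ i, p i ∈ restrictDegree σ L N := by
  obtain ⟨N, hN⟩ := (Set.finite_range fun i => (p i).totalDegree).bddAbove
  exact ⟨N, fun i => mem_restrictDegree_iff_degreeOf_le.2 fun j =>
    ((p i).degreeOf_le_totalDegree j).trans (hN ⟨i, rfl⟩)⟩

end

theorem exists_mul_two_mul_add_pow_lt {a b s : ℕ} (δ : ℕ) (hab : a * 2 ^ s < b) :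
    ∃ N, a * (2 * N + δ + 1) ^ s < b * (N + 1) ^ s := by
  have hlim : Tendsto (fun N : ℕ => (a : ℝ) * (2 + δ * (1 / ((N : ℝ) + 1))) ^ s) atTop
      (𝓝 (a * 2 ^ s)) := by
    simpa using ((tendsto_one_div_add_atTop_nhds_zero_nat (𝕜 := ℝ).const_mul (δ : ℝ)).const_add
      2).pow s |>.const_mul (a : ℝ)
  obtain ⟨N, hN⟩ := (hlim.eventually_lt_const (u := (b : ℝ)) (by exact_mod_cast hab)).exists
  have hle : (2 * N + δ + 1 : ℝ) ≤ (2 + δ * (1 / ((N : ℝ) + 1))) * (N + 1) := by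
    field_simp
    linarith
  have hlt : (a * (2 * N + δ + 1) ^ s : ℝ) < b * (N + 1) ^ s := calc
    _ ≤ a * ((2 + δ * (1 / ((N : ℝ) + 1))) * (N + 1)) ^ s := by gcongr
    _ = a * (2 + δ * (1 / ((N : ℝ) + 1))) ^ s * (N + 1) ^ s := by rw [mul_pow, mul_assoc]
    _ < _ := by gcongr
  exact ⟨N, by exact_mod_cast hlt⟩

namespace HasQuadraticLangProperty

variable {L σ : Type*} [Field L] [Finite σ] {r : ℕ}

theorem exists_ne_zero_mvPolynomial {ι κ : Type*} [Fintype ι] [Fintype κ]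
    (h : HasQuadraticLangProperty L r)
    (q : κ → QuadraticForm (MvPolynomial σ L) (ι → MvPolynomial σ L))
    (hcard : Fintype.card κ * 2 ^ (r + Nat.card σ) < Fintype.card ι) :
    ∃ v, v ≠ 0 ∧ ∀ l, q l v = 0 := by
  classical
  choose M hM using fun l => exists_toQuadraticForm'_eq (q l)
  obtain ⟨δ, hδ⟩ := exists_forall_mem_restrictDegree fun p : κ × ι × ι => M p.1 p.2.1 p.2.2
  obtain ⟨N, hN⟩ := exists_mul_two_mul_add_pow_lt (s := Nat.card σ) δ
    (by rwa [pow_add, ← mul_assoc] at hcard)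
  have hfin (N : ℕ) : FiniteDimensional L (restrictDegree σ L N) :=
    Module.finite_of_finrank_pos (by rw [finrank_restrictDegree]; positivity)
  refine h.exists_ne_zero_of_mapsTo q (restrictDegree σ L N) (restrictDegree σ L (N + δ + N))
    (fun v hv l => ?_) ?_
  · rw [← hM, toQuadraticForm'_apply_eq_sum]
    exact Submodule.sum_mem _ fun i _ => Submodule.sum_mem _ fun j _ =>
      mul_mem_restrictDegree (mul_mem_restrictDegree (hv i) (hδ (l, i, j))) (hv j)
  · rw [finrank_restrictDegree, finrank_restrictDegree]
    convert hN using 1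
    ring

theorem of_isFractionRing_mvPolynomial {F : Type*} [Field F] [Algebra (MvPolynomial σ L) F]
    [IsFractionRing (MvPolynomial σ L) F] (h : HasQuadraticLangProperty L r) :
    HasQuadraticLangProperty F (r + Nat.card σ) := by
  intro m n q hn
  choose M hM using fun l => exists_toQuadraticForm'_eq (q l)
  obtain ⟨D, hD⟩ := IsLocalization.exist_integer_multiples_of_finite
    (nonZeroDivisors (MvPolynomial σ L)) fun p : Fin m × Fin n × Fin n => M p.1 p.2.1 p.2.2
  choose P hP using hD
  obtain ⟨v, hv, hqv⟩ := h.exists_ne_zero_mvPolynomial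
    (fun l => (Matrix.of fun i j => P (l, i, j)).toQuadraticForm') (by simpa using hn)
  let φ := algebraMap (MvPolynomial σ L) F
  have hφ : Function.Injective φ := IsFractionRing.injective _ F
  refine ⟨φ ∘ v, fun h0 => hv (funext fun i => hφ (by simpa using congrFun h0 i)), fun l => ?_⟩
  have hDφ : φ D ≠ 0 := IsLocalization.to_map_ne_zero_of_mem_nonZeroDivisors F le_rfl D.2
  have hPM : (Matrix.of fun i j => P (l, i, j)).map φ = φ D • M l := by
    ext i j
    simpa [Algebra.smul_def] using hP (l, i, j)
  have hDM : φ D * (M l).toQuadraticForm' (φ ∘ v) = 0 := calc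
    _ = (φ D • M l).toQuadraticForm' (φ ∘ v) := by
      simp [toQuadraticForm'_apply_eq_sum, Finset.mul_sum, mul_assoc, mul_left_comm]
    _ = 0 := by rw [← hPM, toQuadraticForm'_map, hqv, map_zero]
  rw [← hM]
  exact (mul_eq_zero.1 hDM).resolve_left hDφ

end HasQuadraticLangProperty

end PurelyTranscendental

section AlgebraicallyClosed

open MvPolynomial

variable {k σ : Type*} [Field k] [IsAlgClosed k] [Finite σ]

theorem height_vanishingIdeal_singleton_le {m : ℕ} {w : σ → k} (G : Fin m → MvPolynomial σ k)
    (hG : ∀ x, (∀ l, eval x (G l) = 0) ↔ x = w) : (vanishingIdeal k {w}).height ≤ m := by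
  have hzero : zeroLocus k (Ideal.span (Set.range G)) = {w} := by
    ext x
    simpa [zeroLocus_span, coe_aeval_eq_eval] using hG x
  have hmin : vanishingIdeal k {w} ∈ (Ideal.span (Set.range G)).minimalPrimes := by
    rw [← Ideal.radical_minimalPrimes, ← vanishingIdeal_zeroLocus_eq_radical (K := k), hzero,
      Ideal.minimalPrimes_eq_subsingleton_self]
    exact Set.mem_singleton _
  refine (Ideal.height_le_card_of_mem_minimalPrimes_span (Set.finite_range G) hmin).trans ?_
  have hcard := Finite.card_range_le G
  rw [Nat.card_fin] at hcard
  exact_mod_cast hcard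

theorem card_le_of_forall_exists_eval_eq_zero_iff {m : ℕ}
    (h : ∀ w : σ → k, ∃ G : Fin m → MvPolynomial σ k, ∀ x, (∀ l, eval x (G l) = 0) ↔ x = w) :
    Nat.card σ ≤ m := by
  have hdim : ringKrullDim (MvPolynomial σ k) ≤ m := by
    refine ringKrullDim_le_iff_isMaximal_height_le _ |>.2 fun I hI => ?_
    obtain ⟨w, rfl⟩ := isMaximal_iff_eq_vanishingIdeal_singleton.1 hI
    obtain ⟨G, hG⟩ := h w
    exact_mod_cast height_vanishingIdeal_singleton_le G hG
  rw [MvPolynomial.ringKrullDim_of_isNoetherianRing, ringKrullDim_eq_zero_of_field,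
    zero_add] at hdim
  exact_mod_cast hdim

variable (k) in
theorem HasQuadraticLangProperty.of_isAlgClosed : HasQuadraticLangProperty k 0 := by
  intro m n q hn
  choose M hM using fun l => exists_toQuadraticForm'_eq (q l)
  by_contra! hq
  suffices hcard : Nat.card (Fin n) ≤ m from hn.not_ge (by simpa using hcard)
  -- Without a common nontrivial zero of the `q l`, the translates `q l (X - w)` cut out `w`.
  refine card_le_of_forall_exists_eval_eq_zero_iff (k := k) fun w =>
    ⟨fun l => ((M l).map C).toQuadraticForm' fun i => X i - C (w i), fun x => ?_⟩
  have heval (l) :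
      eval x (((M l).map C).toQuadraticForm' fun i => X i - C (w i)) = q l (x - w) := by
    simp [← hM, toQuadraticForm'_apply_eq_sum]
  simp only [heval]
  refine ⟨fun h => ?_, fun h l => by simp [h]⟩
  by_contra hxw
  obtain ⟨l, hl⟩ := hq _ (sub_ne_zero.2 hxw)
  exact hl (h l)

end AlgebraicallyClosed

section Dimension

theorem ringKrullDim_le_of_isIntegral {R S : Type*} [CommRing R] [CommRing S] [Algebra R S]
    [Algebra.IsIntegral R S] (hinj : Function.Injective (algebraMap R S)) :
    ringKrullDim R ≤ ringKrullDim S := by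
  refine iSup_le fun l => ?_
  obtain ⟨Q, -, hQ, hQl⟩ :=
    Ideal.exists_ideal_over_prime_of_isIntegral l.head.asIdeal (⊥ : Ideal S)
      (by rw [← RingHom.ker_eq_comap_bot, (RingHom.injective_iff_ker_eq_bot _).1 hinj]
          exact bot_le)
  have : Q.LiesOver l.head.asIdeal := ⟨hQl.symm⟩
  obtain ⟨l', hl', -⟩ := Ideal.exists_ltSeries_of_hasGoingUp l Q
  exact hl' ▸ Order.LTSeries.length_le_krullDim l'

section

variable {A : Type*} [CommRing A]

theorem height_add_ringKrullDim_quotient_le (p : Ideal A) [p.IsPrime] :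
    p.height + ringKrullDim (A ⧸ p) ≤ ringKrullDim A := by
  let x : PrimeSpectrum A := ⟨p, inferInstance⟩
  have : Nonempty (PrimeSpectrum A) := ⟨x⟩
  have hx : PrimeSpectrum.zeroLocus (p : Set A) = Set.Ici x := rfl
  rw [ringKrullDim_quotient, hx, ← Order.coheight_eq_krullDim_Ici,
    PrimeSpectrum.height_eq_orderHeight x, ringKrullDim,
    Order.krullDim_eq_iSup_height_add_coheight_of_nonempty]
  exact_mod_cast le_iSup (fun x => Order.height x + Order.coheight x) x

theorem ringKrullDim_quotient_le_sub {p : Ideal A} [p.IsPrime] {d i : ℕ}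
    (hd : ringKrullDim A ≤ d) (hi : i ≤ p.height) : ringKrullDim (A ⧸ p) ≤ (d - i : ℕ) := by
  have hle : (i : WithBot ℕ∞) + ringKrullDim (A ⧸ p) ≤ d := calc
    _ ≤ p.height + ringKrullDim (A ⧸ p) := by gcongr; exact_mod_cast hi
    _ ≤ d := (height_add_ringKrullDim_quotient_le p).trans hd
  obtain ⟨e, he⟩ : ∃ e : ℕ∞, e = ringKrullDim (A ⧸ p) :=
    WithBot.ne_bot_iff_exists.1 (ringKrullDim_nonneg_of_nontrivial.trans_lt' (by simp)).ne'
  rw [← he] at hle ⊢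
  have hsub : e ≤ (d - i : ℕ) := by
    rw [ENat.natCast_sub]
    exact ENat.le_sub_of_add_le_left (ENat.natCast_ne_top i) (by exact_mod_cast hle)
  exact WithBot.coe_le_coe.2 hsub

end

theorem natCast_le_coheight_last {α : Type*} [Preorder α] {i : ℕ} {c : Fin (i + 1) → α}
    (hc : ∀ j : Fin i, c j.succ < c j.castSucc) : i ≤ Order.coheight (c (Fin.last i)) := by
  have hj (j : Fin (i + 1)) : (j : ℕ) ≤ Order.coheight (c j) := by
    induction j using Fin.induction with
    | zero => simp
    | succ j ih =>
      rw [Fin.val_succ, Nat.cast_add_one]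
      exact (add_le_add_left ih 1).trans (Order.coheight_add_one_le (hc j))
  simpa using hj (Fin.last i)

end Dimension

namespace HasQuadraticLangProperty

variable {k : Type*} [Field k] {r : ℕ}

theorem of_isFractionRing_of_finiteType {B F : Type*} [CommRing B] [IsDomain B] [Algebra k B]
    [Algebra.FiniteType k B] [Field F] [Algebra B F] [IsFractionRing B F] {s : ℕ}
    (h : HasQuadraticLangProperty k r) (hdim : ringKrullDim B ≤ s) :
    HasQuadraticLangProperty F (r + s) := by
  obtain ⟨t, g, hg, hgi⟩ := exists_integral_inj_algHom_of_fg k B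
  let P := MvPolynomial (Fin t) k
  algebraize [g.toRingHom]
  let := ((algebraMap B F).comp g.toRingHom).toAlgebra
  have : IsScalarTower P B F := IsScalarTower.of_algebraMap_eq fun _ => rfl
  have hts : Nat.card (Fin t) ≤ s := by
    have hP := (ringKrullDim_le_of_isIntegral (R := P) (S := B) hg).trans hdim
    rw [MvPolynomial.ringKrullDim_of_isNoetherianRing, ringKrullDim_eq_zero_of_field,
      zero_add] at hP
    exact_mod_cast hP
  have : FaithfulSMul P F := (faithfulSMul_iff_algebraMap_injective P F).2
    ((IsFractionRing.injective B F).comp hg)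
  let := FractionRing.liftAlgebra P F
  have := isAlgebraic_of_isFractionRing P B (FractionRing P) F
  have hP : HasQuadraticLangProperty (FractionRing P) (r + Nat.card (Fin t)) :=
    h.of_isFractionRing_mvPolynomial
  exact hP.of_isAlgebraic.mono (Nat.add_le_add_left hts r)

theorem residueField {A O : Type*} [CommRing A] [Algebra k A] [Algebra.FiniteType k A]
    [CommRing O] [IsLocalRing O] [Algebra A O] (p : Ideal A) [p.IsPrime]
    [IsLocalization.AtPrime O p] {d i : ℕ} (h : HasQuadraticLangProperty k r)
    (hd : ringKrullDim A ≤ d) (hi : i ≤ p.height) :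
    HasQuadraticLangProperty (IsLocalRing.ResidueField O) (r + (d - i)) := by
  have hp : HasQuadraticLangProperty p.ResidueField (r + (d - i)) :=
    h.of_isFractionRing_of_finiteType (B := A ⧸ p) (ringKrullDim_quotient_le_sub hd hi)
  let e := (IsLocalization.algEquiv p.primeCompl (Localization.AtPrime p) O).toRingEquiv
  exact hp.of_surjective _ (IsLocalRing.ResidueField.mapEquiv e).surjective

end HasQuadraticLangProperty

section Scheme

theorem lt_of_ne_of_specializes {X : Scheme} {x y : X} (hne : x ≠ y) (h : x ⤳ y) : y < x :=
  lt_of_le_not_ge h fun h' => hne (h.antisymm h').eq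

theorem ringKrullDim_le_topologicalKrullDim {X : Scheme} {U : X.Opens} (hU : IsAffineOpen U) :
    ringKrullDim Γ(X, U) ≤ topologicalKrullDim X := by
  rw [← PrimeSpectrum.topologicalKrullDim_eq_ringKrullDim]
  exact hU.fromSpec.isOpenEmbedding.isInducing.topologicalKrullDim_le

theorem HasQuadraticLangProperty.residueField_stalk.{u} {k : Type u} [Field k] {r d i : ℕ}
    (h : HasQuadraticLangProperty k r) {X : Scheme.{u}} (f : X ⟶ Spec (.of k))
    [LocallyOfFiniteType f] (hd : topologicalKrullDim X ≤ d) {x : X}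
    (hi : i ≤ Order.coheight x) :
    HasQuadraticLangProperty (IsLocalRing.ResidueField (X.presheaf.stalk x)) (r + (d - i)) := by
  obtain ⟨U, hU, hxU, -⟩ := exists_isAffineOpen_mem_and_subset (x := x) (U := ⊤) trivial
  let p := (hU.primeIdealOf ⟨x, hxU⟩).asIdeal
  let := TopCat.Presheaf.algebra_section_stalk X.presheaf (⟨x, hxU⟩ : U)
  have : IsLocalization.AtPrime (X.presheaf.stalk x) p := hU.isLocalization_stalk ⟨x, hxU⟩
  have hp : i ≤ p.height := by
    have hstalk := ringKrullDim_stalk_eq_coheight x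
    rw [IsLocalization.AtPrime.ringKrullDim_eq_height p] at hstalk
    exact hi.trans_eq (by exact_mod_cast hstalk.symm)
  let φ : k →+* Γ(X, U) := (f.appLE ⊤ U le_top).hom.comp (Scheme.ΓSpecIso (.of k)).inv.hom
  have hφ : φ.FiniteType := (f.finiteType_appLE (isAffineOpen_top _) hU le_top).comp <|
    .of_surjective _ (Scheme.ΓSpecIso (.of k)).symm.commRingCatIsoToRingEquiv.surjective
  algebraize [φ]
  exact h.residueField p ((ringKrullDim_le_topologicalKrullDim hU).trans hd) hp

end Scheme

section Henselian

open IsLocalRing QuadraticMap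

theorem henselianLocalRing_of_henselianRing (R : Type*) [CommRing R] [IsLocalRing R]
    [HenselianRing R (maximalIdeal R)] : HenselianLocalRing R where
  is_henselian f hf a₀ h₁ h₂ := HenselianRing.is_henselian f hf a₀ h₁ (h₂.map _)

section

variable {R : Type*} [CommRing R] [HenselianLocalRing R]

theorem exists_mem_maximalIdeal_quadratic_eq_zero (a : R) {b c : R} (hb : IsUnit b)
    (hc : c ∈ maximalIdeal R) : ∃ t ∈ maximalIdeal R, a * t ^ 2 + b * t + c = 0 := by
  -- Substituting `t = c / u` turns the equation into the monic one `u ^ 2 + b * u + a * c = 0`.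
  let f : Polynomial R := .X ^ 2 + .C b * .X + .C (a * c)
  have hderiv : f.derivative.eval (-b) = -b := calc
    _ = 2 * -b + b := by simp [f, one_add_one_eq_two]
    _ = -b := by ring
  obtain ⟨u, hu, hub⟩ := HenselianLocalRing.is_henselian f (by unfold f; monicity!) (-b)
    (by simpa [f, pow_two] using Ideal.mul_mem_left _ a hc) (by simpa only [hderiv] using hb.neg)
  have hu_unit : IsUnit u := by
    by_contra h
    have := sub_mem hub ((mem_maximalIdeal u).2 h)
    simp [hb] at this
  obtain ⟨w, rfl⟩ := hu_unit
  have hroot : (w : R) ^ 2 + b * w + a * c = 0 := by simpa [f] using hu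
  have hw : (w : R) * ↑w⁻¹ = 1 := w.mul_inv
  refine ⟨c * ↑w⁻¹, Ideal.mul_mem_right _ _ hc, ?_⟩
  linear_combination (c * (↑w⁻¹ : R) ^ 2) * hroot - c * (w * ↑w⁻¹ + 1 + b * ↑w⁻¹) * hw

theorem exists_mem_maximalIdeal_apply_add_smul_eq_zero {V : Type*} [AddCommGroup V] [Module R V]
    (q : QuadraticForm R V) {w u : V} (hw : q w ∈ maximalIdeal R) (hwu : IsUnit (polar q w u)) :
    ∃ t ∈ maximalIdeal R, q (w + t • u) = 0 := by
  obtain ⟨t, ht, hroot⟩ := exists_mem_maximalIdeal_quadratic_eq_zero (q u) hwu hw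
  refine ⟨t, ht, ?_⟩
  rw [QuadraticMap.map_add q, QuadraticMap.map_smul, polar_smul_right, smul_eq_mul, smul_eq_mul,
    ← hroot]
  ring

end

section

variable {R ι : Type*} [CommRing R] [IsLocalRing R]

theorem exists_forall_mem_maximalIdeal_of_mem_span_sup [Nonempty ι] (v₀ : ι → R) :
    ∃ j₀, ∀ w ∈ Submodule.span R {v₀} ⊔ maximalIdeal R • ⊤,
      w j₀ ∈ maximalIdeal R → ∀ j, w j ∈ maximalIdeal R := by
  obtain ⟨j₀, hj₀⟩ : ∃ j₀, v₀ j₀ ∈ maximalIdeal R → ∀ j, v₀ j ∈ maximalIdeal R := by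
    by_cases h : ∀ j, v₀ j ∈ maximalIdeal R
    · exact ⟨Classical.arbitrary ι, fun _ => h⟩
    · push Not at h
      exact h.imp fun j hj hj' => absurd hj' hj
  refine ⟨j₀, fun w hw hwj₀ j => ?_⟩
  obtain ⟨_, ha, b, hb, rfl⟩ := Submodule.mem_sup.1 hw
  obtain ⟨c, rfl⟩ := Submodule.mem_span_singleton.1 ha
  have hbj (j) : b j ∈ maximalIdeal R :=
    Submodule.smul_induction_on (p := fun b => b j ∈ maximalIdeal R) hb
      (fun t ht v _ => Ideal.mul_mem_right (v j) _ ht) fun _ _ => add_mem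
  have hcv : c * v₀ j₀ ∈ maximalIdeal R := (add_mem_cancel_right (hbj j₀)).1 hwj₀
  refine add_mem ?_ (hbj j)
  obtain hc | hv := Ideal.IsPrime.mem_or_mem inferInstance hcv
  · exact Ideal.mul_mem_right _ _ hc
  · exact Ideal.mul_mem_left _ c (hj₀ hv j)

theorem HasQuadraticLangProperty.exists_isUnit_and_apply_mem [Fintype ι] {r : ℕ}
    (h : HasQuadraticLangProperty (ResidueField R) r) (hι : 2 ^ r + 1 < Fintype.card ι)
    (q : QuadraticForm R (ι → R)) (j₀ : ι) :
    ∃ w, w j₀ ∈ maximalIdeal R ∧ (∃ j, IsUnit (w j)) ∧ q w ∈ maximalIdeal R := by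
  classical
  obtain ⟨M, rfl⟩ := exists_toQuadraticForm'_eq q
  let π : (ι → ResidueField R) →ₗ[ResidueField R] ResidueField R := LinearMap.proj j₀
  have hker : 2 ^ r < Module.finrank (ResidueField R) π.ker := by
    have hrange := π.range.finrank_le
    have hsum := π.finrank_range_add_finrank_ker
    rw [Module.finrank_self] at hrange
    rw [Module.finrank_fintype_fun_eq_card] at hsum
    lia
  obtain ⟨⟨v, hvj₀⟩, hv, hqv⟩ := h.exists_ne_zero (κ := Unit)
    (fun _ => (M.map (residue R)).toQuadraticForm'.comp π.ker.subtype) (by simpa using hker)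
  obtain ⟨w, rfl⟩ := residue_surjective.comp_left v
  refine ⟨w, by simpa [π] using hvj₀, ?_, ?_⟩
  · by_contra! hw
    exact hv (Subtype.ext (funext fun j => by simpa using hw j))
  · rw [← residue_eq_zero_iff, ← toQuadraticForm'_map]
    exact hqv ()

end

variable {R ι : Type*} [CommRing R] [Fintype ι] {r : ℕ}

theorem HasQuadraticLangProperty.exists_isUnit_and_apply_eq_zero [HenselianLocalRing R]
    (h : HasQuadraticLangProperty (ResidueField R) r) (hι : 2 ^ r + 1 < Fintype.card ι)
    (q : QuadraticForm R (ι → R)) {v₀ : ι → R}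
    (hq : residualRadical (maximalIdeal R) q ≤ Submodule.span R {v₀} ⊔ maximalIdeal R • ⊤) :
    ∃ v, (∃ j, IsUnit (v j)) ∧ q v = 0 := by
  have : Nonempty ι := Fintype.card_pos_iff.1 (Nat.zero_lt_of_lt hι)
  obtain ⟨j₀, hj₀⟩ := exists_forall_mem_maximalIdeal_of_mem_span_sup v₀
  obtain ⟨w, hwj₀, ⟨j, hwj⟩, hqw⟩ := h.exists_isUnit_and_apply_mem hι q j₀
  obtain ⟨u, hu⟩ : ∃ u, IsUnit (polar q w u) := by
    by_contra! hw
    exact hj₀ w (hq hw) hwj₀ j hwj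
  obtain ⟨t, ht, hqt⟩ := exists_mem_maximalIdeal_apply_add_smul_eq_zero q hqw hu
  refine ⟨w + t • u, ⟨j, ?_⟩, hqt⟩
  by_contra hwt
  exact (add_mem_cancel_right (Ideal.mul_mem_right (u j) _ ht)).1 hwt hwj

theorem HasQuadraticLangProperty.exists_isUnit_and_apply_eq_zero_adicCompletion [IsLocalRing R]
    [IsNoetherianRing R] (h : HasQuadraticLangProperty (ResidueField R) r)
    (hι : 2 ^ r + 1 < Fintype.card ι)
    (q : QuadraticForm (AdicCompletion (maximalIdeal R) R)
      (ι → AdicCompletion (maximalIdeal R) R)) {v₀ : ι → AdicCompletion (maximalIdeal R) R}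
    (hq : residualRadical
        ((maximalIdeal R).map (algebraMap R (AdicCompletion (maximalIdeal R) R))) q ≤
      Submodule.span _ {v₀} ⊔
        (maximalIdeal R).map (algebraMap R (AdicCompletion (maximalIdeal R) R)) • ⊤) :
    ∃ v, (∃ j, IsUnit (v j)) ∧ q v = 0 := by
  have := henselianLocalRing_of_henselianRing (AdicCompletion (maximalIdeal R) R)
  rw [← AdicCompletion.maximalIdeal_eq_map] at hq
  exact (h.of_surjective _ (AdicCompletion.residueField_map_bijective R).2)
    |>.exists_isUnit_and_apply_eq_zero hι q hq

end Henselian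

theorem isotropic_of_simple_degeneration_over_completed_stalk_general.{u}
    {k : Type u} [Field k] {r : ℕ} (hk : HasQuadraticLangProperty k r)
    {X : Scheme.{u}} (f : X ⟶ Spec (.of k)) [LocallyOfFiniteType f]
    {d : ℕ} (hdim : topologicalKrullDim X ≤ d) {i : ℕ} {x : X} (hcodim : i ≤ Order.coheight x)
    {n : ℕ} (hn : 2 ^ (r + (d - i)) + 1 < n)
    (q : QuadraticForm (completedStalk X x) (Fin n → completedStalk X x))
    {v₀ : Fin n → completedStalk X x}
    (hq : QuadraticMap.residualRadical
        ((IsLocalRing.maximalIdeal _).map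
          (algebraMap (X.presheaf.stalk x) (completedStalk X x))) q ≤
      Submodule.span (completedStalk X x) {v₀} ⊔
        (IsLocalRing.maximalIdeal _).map
          (algebraMap (X.presheaf.stalk x) (completedStalk X x)) • ⊤) :
    ∃ v, (∃ j, IsUnit (v j)) ∧ q v = 0 := by
  have : IsLocallyNoetherian X := LocallyOfFiniteType.isLocallyNoetherian f
  exact (hk.residueField_stalk f hdim hcodim).exists_isUnit_and_apply_eq_zero_adicCompletion
    (by simpa using hn) q hq

set_option maxHeartbeats 1000000 in
theorem isotropic_of_simple_degeneration_over_completed_stalk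
    {k : Type} [Field k] [IsAlgClosed k] (hchar : (2 : k) ≠ 0)
    (X : Scheme) (f : X ⟶ Spec (CommRingCat.of k)) [LocallyOfFiniteType f]
    [IsIntegral X] [IsLocallyNoetherian X]
    -- X is regular: each stalk is a regular local ring
    (hreg : ∀ y : X, ∃ s : Finset (X.presheaf.stalk y),
      Ideal.span (s : Set (X.presheaf.stalk y)) =
        IsLocalRing.maximalIdeal (X.presheaf.stalk y) ∧
      (s.card : WithBot ℕ∞) = ringKrullDim (X.presheaf.stalk y))
    (d : ℕ) (hdim : topologicalKrullDim X = (d : ℕ∞))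
    (i : ℕ) (hi : 0 < i)
    -- x has codimension ≥ i: a strictly specializing chain of length i ending at x
    (x : X) (c : Fin (i + 1) → X)
    (hchain : ∀ j : Fin i, c j.castSucc ≠ c j.succ ∧ c j.castSucc ⤳ c j.succ)
    (hlast : c (Fin.last i) = x)
    (n : ℕ) (hn : 2 ^ (d - i) + 1 < n)
    (q : QuadraticForm (completedStalk X x) (Fin n → completedStalk X x))
    -- simple degeneration: the radical of the reduction of q has rank ≤ 1
    (hsd : ∃ v₀ : Fin n → completedStalk X x,
      QuadraticMap.residualRadical
        (Ideal.map (algebraMap (X.presheaf.stalk x) (completedStalk X x))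
          (IsLocalRing.maximalIdeal (X.presheaf.stalk x))) q ≤
        Submodule.span (completedStalk X x) {v₀} ⊔
          (Ideal.map (algebraMap (X.presheaf.stalk x) (completedStalk X x))
            (IsLocalRing.maximalIdeal (X.presheaf.stalk x)) •
            (⊤ : Submodule (completedStalk X x) (Fin n → completedStalk X x)))) :
    -- q is isotropic over K_x (equivalently, over the domain Ô_{S,x})
    ∃ v : Fin n → completedStalk X x, v ≠ 0 ∧ q v = 0 := by
  obtain ⟨v₀, hv₀⟩ := hsd
  have hcodim : i ≤ Order.coheight x := hlast ▸ natCast_le_coheight_last fun j =>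
    lt_of_ne_of_specializes (hchain j).1 (hchain j).2
  obtain ⟨v, ⟨j, hj⟩, hqv⟩ := isotropic_of_simple_degeneration_over_completed_stalk_general
    (.of_isAlgClosed k) f hdim.le hcodim (by simpa using hn) q hv₀
  exact ⟨v, fun hv => hj.ne_zero (congrFun hv j), hqv⟩
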